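/- (Duality theorem, Riemann–Liouville case.) Let a ∈ ℝ, let I be an interval with least element a, nonempty interior, and I ⊂ [a,∞), let m ∈ ℕ*, let α = (α₁,…,α_m) ∈ (0,1]^m, and let A : I → ℝ^{m×m} be locally essentially bounded. Suppose Z satisfies the left state-transition integral equation: for almost every s, t ∈ I with s < t and all i, j, Z_{ij}(t,s) = ((t−s)^{α_i−1}/Γ(α_i))·δ_{ij} + (1/Γ(α_i)) ∫_s^t (t−τ)^{α_i−1} (A(τ) Z(τ,s))_{ij} dτ, together with the bound |Z_{ij}(t,s)| ≤ (t−s)^{α_i−1}·Θ^b on each [a,b] ⊂ I for some Θ^b ≥ 0. Then Z also satisfies the right state-transition integral equation with the transposed multi-order: for almost every s, t ∈ I with s < t and all i, j, Z_{ij}(t,s) = ((t−s)^{α_j−1}/Γ(α_j))·δ_{ij} + (1/Γ(α_j)) ∫_s^t (τ−s)^{α_j−1} (Z(t,τ) A(τ))_{ij} dτ. -/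

import Mathlib

open MeasureTheory Set

open scoped ENNReal NNReal

/-!
Write `(K ⋆ L)(t, s) = ∫ K(t, u) L(u, s) du` for matrix-valued kernels, `φ(t, s)` for the diagonal
matrix with entries `(t - s) ^ (α i - 1) / Γ (α i)`, `P(t, s) = φ(t, s) A(s)` and
`Q(t, s) = A(t) φ(t, s)`. The left equation is `Z = φ + P ⋆ Z` and the right one is
`Z = φ + Z ⋆ Q`. As `P ⋆ φ = φ ⋆ Q`, associativity gives
`φ + Z ⋆ Q = φ + (φ + P ⋆ Z) ⋆ Q = φ + P ⋆ (φ + Z ⋆ Q)`, so `Z` and `φ + Z ⋆ Q` both solve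
`X = φ + P ⋆ X`. The solution is unique: on a bounded piece of `I`, `P` contracts `L¹(e^{-lt} dt)`
for large `l`, since the Laplace transform of `u ^ (α i - 1) / Γ (α i)` at `l` is `l ^ (-α i)`.
-/

section AlmostEverywhere

variable {X Y T : Type*} [MeasurableSpace X] [MeasurableSpace Y] [MeasurableSpace T]
  {μ : Measure X} {ν : Measure Y} {ρ : Measure T} [SFinite ν] {q : X × Y → Prop}

theorem ae_prod_of_ae_ae_swap [SFinite μ] (hq : MeasurableSet {p | q p})
    (h : ∀ᵐ y ∂ν, ∀ᵐ x ∂μ, q (x, y)) : ∀ᵐ p ∂μ.prod ν, q p :=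
  (Measure.ae_prod_iff_ae_ae hq).2 ((Measure.ae_ae_comm hq).2 h)

theorem ae_ae_swap_of_ae_prod [SFinite μ] (h : ∀ᵐ p ∂μ.prod ν, q p) : ∀ᵐ y ∂ν, ∀ᵐ x ∂μ, q (x, y) :=
  Measure.ae_ae_of_ae_prod (Measure.measurePreserving_swap.quasiMeasurePreserving.ae h)

theorem ae_prod_ae_row (h : ∀ᵐ p ∂μ.prod ν, q p) :
    ∀ᵐ p ∂μ.prod ρ, ∀ᵐ y ∂ν, q (p.1, y) :=
  Measure.quasiMeasurePreserving_fst.ae (Measure.ae_ae_of_ae_prod h)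

theorem ae_prod_ae_column [SFinite μ] (h : ∀ᵐ p ∂μ.prod ν, q p) :
    ∀ᵐ p ∂ρ.prod ν, ∀ᵐ x ∂μ, q (x, p.2) :=
  Measure.quasiMeasurePreserving_snd.ae (ae_ae_swap_of_ae_prod h)

end AlmostEverywhere

section KernelComposition

variable {X : Type*} [MeasurableSpace X]

/-- The composition `(k ⋆ l)(x, y) = ∫ k(x, u) l(u, y) dμ(u)` of nonnegative kernels. -/
noncomputable def lkernelComp (μ : Measure X) (k l : X × X → ℝ≥0∞) : X × X → ℝ≥0∞ :=
  fun p => ∫⁻ u, k (p.1, u) * l (u, p.2) ∂μ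

/-- The composition `(K ⋆ L)(x, y) = ∫ K(x, u) L(u, y) dμ(u)` of kernels with values in a normed
algebra, the kernel of the product of the two integral operators. -/
noncomputable def kernelComp {E : Type*} [NormedRing E] [NormedAlgebra ℝ E] (μ : Measure X)
    (K L : X × X → E) : X × X → E :=
  fun p => ∫ u, K (p.1, u) * L (u, p.2) ∂μ

/-- The column half of the Schur test: for almost every `y`, the column `K(·, y)` has norm at most
`C * w y` in `L¹(w dμ)`, so that `K` acts on `L¹(w dμ)` with norm at most `C`. The values of `K` may
lie in `ℝ≥0∞`, in order to treat `K` and `‖K‖ₑ` alike. -/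
structure HasColumnBound {E : Type*} [TopologicalSpace E] [ContinuousENorm E] (μ : Measure X)
    (w : X → ℝ≥0) (K : X × X → E) (C : ℝ≥0) : Prop where
  stronglyMeasurable : StronglyMeasurable K
  ae_lintegral_le : ∀ᵐ y ∂μ, ∫⁻ x, ‖K (x, y)‖ₑ * w x ∂μ ≤ C * w y

variable {μ : Measure X} {w : X → ℝ≥0} {C C' D : ℝ≥0}

theorem measurable_lkernelComp [SFinite μ] {k l : X × X → ℝ≥0∞} (hk : Measurable k)
    (hl : Measurable l) : Measurable (lkernelComp μ k l) :=
  Measurable.lintegral_prod_right'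
    (f := fun r : (X × X) × X => k (r.1.1, r.2) * l (r.2, r.1.2)) (by fun_prop)

namespace HasColumnBound

section ENNReal

variable {k l : X × X → ℝ≥0∞}

theorem measurable (hk : HasColumnBound μ w k C) : Measurable k :=
  hk.stronglyMeasurable.measurable

theorem lintegral_mul_weight_le [SFinite μ] (hk : HasColumnBound μ w k C) (hw : Measurable w)
    {f : X → ℝ≥0∞} (hf : Measurable f) :
    ∫⁻ x, (∫⁻ u, k (x, u) * f u ∂μ) * w x ∂μ ≤ C * ∫⁻ u, f u * w u ∂μ := by
  have hk' := hk.measurable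
  calc ∫⁻ x, (∫⁻ u, k (x, u) * f u ∂μ) * w x ∂μ
      = ∫⁻ x, ∫⁻ u, k (x, u) * f u * w x ∂μ ∂μ := by
        simp only [lintegral_mul_const' _ _ ENNReal.coe_ne_top]
    _ = ∫⁻ u, ∫⁻ x, k (x, u) * f u * w x ∂μ ∂μ :=
        lintegral_lintegral_swap (by fun_prop)
    _ = ∫⁻ u, f u * ∫⁻ x, k (x, u) * w x ∂μ ∂μ := by
        refine lintegral_congr fun u => ?_
        rw [← lintegral_const_mul _ (by fun_prop)]
        exact lintegral_congr fun x => by ring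
    _ ≤ ∫⁻ u, f u * (C * w u) ∂μ := by
        refine lintegral_mono_ae ?_
        filter_upwards [hk.ae_lintegral_le] with u hu
        gcongr
        exact hu
    _ = C * ∫⁻ u, f u * w u ∂μ := by
        rw [← lintegral_const_mul' _ _ ENNReal.coe_ne_top]
        exact lintegral_congr fun u => by ring

theorem lcomp [SFinite μ] (hk : HasColumnBound μ w k C) (hl : HasColumnBound μ w l C')
    (hw : Measurable w) : HasColumnBound μ w (lkernelComp μ k l) (C * C') where
  stronglyMeasurable := (measurable_lkernelComp hk.measurable hl.measurable).stronglyMeasurable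
  ae_lintegral_le := by
    filter_upwards [hl.ae_lintegral_le] with y hy
    calc ∫⁻ x, (∫⁻ u, k (x, u) * l (u, y) ∂μ) * w x ∂μ
        ≤ C * ∫⁻ u, l (u, y) * w u ∂μ :=
          hk.lintegral_mul_weight_le hw (hl.measurable.comp measurable_prodMk_right)
      _ ≤ C * (C' * w y) := by gcongr; exact hy
      _ = (C * C' : ℝ≥0) * w y := by push_cast; ring

theorem ae_lt_top [SFinite μ] (hk : HasColumnBound μ w k C) (hw : Measurable w)
    (hw₀ : ∀ x, w x ≠ 0) : ∀ᵐ p ∂μ.prod μ, k p < ∞ := by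
  have hk' := hk.measurable
  refine ae_prod_of_ae_ae_swap (measurableSet_lt hk' measurable_const) ?_
  filter_upwards [hk.ae_lintegral_le] with y hy
  have hfin : ∫⁻ x, k (x, y) * w x ∂μ ≠ ∞ :=
    ne_top_of_le_ne_top (ENNReal.mul_ne_top ENNReal.coe_ne_top ENNReal.coe_ne_top) hy
  filter_upwards [MeasureTheory.ae_lt_top (by fun_prop) hfin] with x hx
  exact ENNReal.lt_top_of_mul_ne_top_left hx.ne (by simpa using hw₀ x)

theorem ae_eq_zero_of_le_lkernelComp [SFinite μ] (hk : HasColumnBound μ w k C)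
    (hl : HasColumnBound μ w l C') (hw : Measurable w) (hw₀ : ∀ x, w x ≠ 0) (hC : C < 1)
    (h : l ≤ᵐ[μ.prod μ] lkernelComp μ k l) : l =ᵐ[μ.prod μ] 0 := by
  have hl' := hl.measurable
  refine ae_prod_of_ae_ae_swap (measurableSet_eq_fun hl' measurable_const) ?_
  filter_upwards [hl.ae_lintegral_le, ae_ae_swap_of_ae_prod h] with y hy hle
  have hfin : ∫⁻ x, l (x, y) * w x ∂μ ≠ ∞ :=
    ne_top_of_le_ne_top (ENNReal.mul_ne_top ENNReal.coe_ne_top ENNReal.coe_ne_top) hy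
  have hcontr : ∫⁻ x, l (x, y) * w x ∂μ ≤ C * ∫⁻ x, l (x, y) * w x ∂μ := by
    refine (lintegral_mono_ae ?_).trans
      (hk.lintegral_mul_weight_le hw (hl'.comp measurable_prodMk_right))
    filter_upwards [hle] with x hx
    gcongr
    exact hx
  have hzero : ∫⁻ x, l (x, y) * w x ∂μ = 0 := by
    by_contra hne
    refine hcontr.not_gt ?_
    simpa using ENNReal.mul_lt_mul_left hne hfin (ENNReal.coe_lt_one_iff.2 hC)
  filter_upwards [(lintegral_eq_zero_iff (by fun_prop)).1 hzero] with x hx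
  simpa [hw₀ x] using hx

end ENNReal

section Algebra

variable {E : Type*} [NormedAddCommGroup E] {K L : X × X → E}

theorem enorm (hK : HasColumnBound μ w K C) : HasColumnBound μ w (fun p => ‖K p‖ₑ) C where
  stronglyMeasurable := hK.stronglyMeasurable.enorm.stronglyMeasurable
  ae_lintegral_le := hK.ae_lintegral_le

theorem of_enorm_le {k : X × X → ℝ≥0∞} (hk : HasColumnBound μ w k C) (hK : StronglyMeasurable K)
    (h : ∀ p, ‖K p‖ₑ ≤ k p) : HasColumnBound μ w K C where
  stronglyMeasurable := hK
  ae_lintegral_le := by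
    filter_upwards [hk.ae_lintegral_le] with y hy
    exact (lintegral_mono fun x => by gcongr; exact h (x, y)).trans hy

theorem add (hK : HasColumnBound μ w K C) (hL : HasColumnBound μ w L C') (hw : Measurable w) :
    HasColumnBound μ w (K + L) (C + C') where
  stronglyMeasurable := hK.stronglyMeasurable.add hL.stronglyMeasurable
  ae_lintegral_le := by
    have hK' := hK.enorm.measurable
    filter_upwards [hK.ae_lintegral_le, hL.ae_lintegral_le] with y hKy hLy
    calc ∫⁻ x, ‖K (x, y) + L (x, y)‖ₑ * w x ∂μ
        ≤ ∫⁻ x, (‖K (x, y)‖ₑ * w x + ‖L (x, y)‖ₑ * w x) ∂μ := by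
          refine lintegral_mono fun x => ?_
          rw [← add_mul]
          gcongr
          exact enorm_add_le _ _
      _ = ∫⁻ x, ‖K (x, y)‖ₑ * w x ∂μ + ∫⁻ x, ‖L (x, y)‖ₑ * w x ∂μ :=
          lintegral_add_left ((hK'.comp measurable_prodMk_right).mul (by fun_prop)) _
      _ ≤ (C + C' : ℝ≥0) * w y := by
          push_cast
          rw [add_mul]
          gcongr

theorem neg (hK : HasColumnBound μ w K C) : HasColumnBound μ w (-K) C where
  stronglyMeasurable := hK.stronglyMeasurable.neg
  ae_lintegral_le := by simpa using hK.ae_lintegral_le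

end Algebra

end HasColumnBound

theorem enorm_mul_le_mul_enorm {R : Type*} [SeminormedRing R] (x y : R) :
    ‖x * y‖ₑ ≤ ‖x‖ₑ * ‖y‖ₑ :=
  ENNReal.coe_le_coe.2 (nnnorm_mul_le x y)

variable {E : Type*} [NormedRing E] {K L M : X × X → E}

namespace HasColumnBound

theorem fst_mul {A : X → E} (hK : HasColumnBound μ w K C) (hAmeas : StronglyMeasurable A)
    (hA : ∀ᵐ x ∂μ, ‖A x‖ₑ ≤ C') : HasColumnBound μ w (fun p => A p.1 * K p) (C' * C) where
  stronglyMeasurable := (hAmeas.comp_measurable measurable_fst).mul hK.stronglyMeasurable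
  ae_lintegral_le := by
    filter_upwards [hK.ae_lintegral_le] with y hy
    calc ∫⁻ x, ‖A x * K (x, y)‖ₑ * w x ∂μ
        ≤ ∫⁻ x, C' * (‖K (x, y)‖ₑ * w x) ∂μ := by
          refine lintegral_mono_ae ?_
          filter_upwards [hA] with x hx
          rw [← mul_assoc]
          gcongr
          exact (enorm_mul_le_mul_enorm _ _).trans (by gcongr)
      _ = C' * ∫⁻ x, ‖K (x, y)‖ₑ * w x ∂μ := lintegral_const_mul' _ _ ENNReal.coe_ne_top
      _ ≤ (C' * C : ℝ≥0) * w y := by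
          rw [ENNReal.coe_mul, mul_assoc]
          gcongr

theorem mul_snd {A : X → E} (hK : HasColumnBound μ w K C) (hAmeas : StronglyMeasurable A)
    (hA : ∀ᵐ y ∂μ, ‖A y‖ₑ ≤ C') : HasColumnBound μ w (fun p => K p * A p.2) (C' * C) where
  stronglyMeasurable := hK.stronglyMeasurable.mul (hAmeas.comp_measurable measurable_snd)
  ae_lintegral_le := by
    filter_upwards [hA, hK.ae_lintegral_le] with y hAy hy
    calc ∫⁻ x, ‖K (x, y) * A y‖ₑ * w x ∂μ
        ≤ ∫⁻ x, C' * (‖K (x, y)‖ₑ * w x) ∂μ := by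
          refine lintegral_mono fun x => ?_
          rw [← mul_assoc, mul_comm (C' : ℝ≥0∞)]
          gcongr
          exact (enorm_mul_le_mul_enorm _ _).trans (by gcongr)
      _ = C' * ∫⁻ x, ‖K (x, y)‖ₑ * w x ∂μ := lintegral_const_mul' _ _ ENNReal.coe_ne_top
      _ ≤ (C' * C : ℝ≥0) * w y := by
          rw [ENNReal.coe_mul, mul_assoc]
          gcongr

theorem ae_integrable_mul [SFinite μ] (hK : HasColumnBound μ w K C) (hL : HasColumnBound μ w L C')
    (hw : Measurable w) (hw₀ : ∀ x, w x ≠ 0) :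
    ∀ᵐ p ∂μ.prod μ, Integrable (fun u => K (p.1, u) * L (u, p.2)) μ := by
  filter_upwards [(hK.enorm.lcomp hL.enorm hw).ae_lt_top hw hw₀] with p hp
  refine ⟨((hK.stronglyMeasurable.comp_measurable measurable_prodMk_left).mul
    (hL.stronglyMeasurable.comp_measurable measurable_prodMk_right)).aestronglyMeasurable, ?_⟩
  exact (lintegral_mono fun _ => enorm_mul_le_mul_enorm _ _).trans_lt hp

theorem ae_integrable_mul_mul [SFinite μ] (hK : HasColumnBound μ w K C)
    (hL : HasColumnBound μ w L C') (hM : HasColumnBound μ w M D) (hw : Measurable w)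
    (hw₀ : ∀ x, w x ≠ 0) :
    ∀ᵐ p ∂μ.prod μ,
      Integrable (fun r : X × X => K (p.1, r.1) * (L r * M (r.2, p.2))) (μ.prod μ) := by
  have hLM := hL.enorm.lcomp hM.enorm hw
  filter_upwards [(hK.enorm.lcomp hLM hw).ae_lt_top hw hw₀] with p hp
  have hmeas : StronglyMeasurable fun r : X × X => K (p.1, r.1) * (L r * M (r.2, p.2)) :=
    (hK.stronglyMeasurable.comp_measurable (by fun_prop)).mul
      (hL.stronglyMeasurable.mul (hM.stronglyMeasurable.comp_measurable (by fun_prop)))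
  refine ⟨hmeas.aestronglyMeasurable, ?_⟩
  calc ∫⁻ r, ‖K (p.1, r.1) * (L r * M (r.2, p.2))‖ₑ ∂μ.prod μ
      = ∫⁻ u, ∫⁻ v, ‖K (p.1, u) * (L (u, v) * M (v, p.2))‖ₑ ∂μ ∂μ :=
        lintegral_prod _ hmeas.enorm.aemeasurable
    _ ≤ ∫⁻ u, ∫⁻ v, ‖K (p.1, u)‖ₑ * (‖L (u, v)‖ₑ * ‖M (v, p.2)‖ₑ) ∂μ ∂μ := by
        refine lintegral_mono fun u => lintegral_mono fun v => (enorm_mul_le_mul_enorm _ _).trans ?_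
        gcongr
        exact enorm_mul_le_mul_enorm _ _
    _ = ∫⁻ u, ‖K (p.1, u)‖ₑ * ∫⁻ v, ‖L (u, v)‖ₑ * ‖M (v, p.2)‖ₑ ∂μ ∂μ := by
        simp only [lintegral_const_mul' _ _ enorm_ne_top]
    _ < ∞ := hp

end HasColumnBound

variable [NormedAlgebra ℝ E]

theorem stronglyMeasurable_kernelComp [SFinite μ] (hK : StronglyMeasurable K)
    (hL : StronglyMeasurable L) : StronglyMeasurable (kernelComp μ K L) :=
  StronglyMeasurable.integral_prod_right'
    (f := fun r : (X × X) × X => K (r.1.1, r.2) * L (r.2, r.1.2))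
    ((hK.comp_measurable (by fun_prop)).mul (hL.comp_measurable (by fun_prop)))

theorem enorm_kernelComp_le (K L : X × X → E) (p : X × X) :
    ‖kernelComp μ K L p‖ₑ ≤ lkernelComp μ (fun p => ‖K p‖ₑ) (fun p => ‖L p‖ₑ) p :=
  (enorm_integral_le_lintegral_enorm _).trans (lintegral_mono fun _ => enorm_mul_le_mul_enorm _ _)

theorem kernelComp_neg (K L : X × X → E) : kernelComp μ K (-L) = -kernelComp μ K L := by
  ext p
  simp [kernelComp, integral_neg]

theorem kernelComp_congr_left [SFinite μ] (h : K =ᵐ[μ.prod μ] L) :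
    kernelComp μ K M =ᵐ[μ.prod μ] kernelComp μ L M := by
  filter_upwards [ae_prod_ae_row h] with p hp
  refine integral_congr_ae ?_
  filter_upwards [hp] with u hu
  rw [hu]

namespace HasColumnBound

variable [SFinite μ]

theorem comp (hK : HasColumnBound μ w K C) (hL : HasColumnBound μ w L C')
    (hw : Measurable w) : HasColumnBound μ w (kernelComp μ K L) (C * C') :=
  (hK.enorm.lcomp hL.enorm hw).of_enorm_le
    (stronglyMeasurable_kernelComp hK.stronglyMeasurable hL.stronglyMeasurable)
    (enorm_kernelComp_le K L)

theorem kernelComp_add (hK : HasColumnBound μ w K C) (hL : HasColumnBound μ w L C')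
    (hM : HasColumnBound μ w M D) (hw : Measurable w) (hw₀ : ∀ x, w x ≠ 0) :
    kernelComp μ K (L + M) =ᵐ[μ.prod μ] kernelComp μ K L + kernelComp μ K M := by
  filter_upwards [hK.ae_integrable_mul hL hw hw₀, hK.ae_integrable_mul hM hw hw₀]
    with p hKL hKM
  simp only [kernelComp, Pi.add_apply, mul_add, integral_add hKL hKM]

theorem add_kernelComp (hK : HasColumnBound μ w K C) (hL : HasColumnBound μ w L C')
    (hM : HasColumnBound μ w M D) (hw : Measurable w) (hw₀ : ∀ x, w x ≠ 0) :
    kernelComp μ (K + L) M =ᵐ[μ.prod μ] kernelComp μ K M + kernelComp μ L M := by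
  filter_upwards [hK.ae_integrable_mul hM hw hw₀, hL.ae_integrable_mul hM hw hw₀]
    with p hKM hLM
  simp only [kernelComp, Pi.add_apply, add_mul, integral_add hKM hLM]

theorem kernelComp_assoc (hK : HasColumnBound μ w K C) (hL : HasColumnBound μ w L C')
    (hM : HasColumnBound μ w M D) (hw : Measurable w) (hw₀ : ∀ x, w x ≠ 0) :
    kernelComp μ (kernelComp μ K L) M =ᵐ[μ.prod μ] kernelComp μ K (kernelComp μ L M) := by
  filter_upwards [hK.ae_integrable_mul_mul hL hM hw hw₀,
    ae_prod_ae_row (hK.ae_integrable_mul hL hw hw₀),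
    ae_prod_ae_column (hL.ae_integrable_mul hM hw hw₀)] with p hKLM hKL hLM
  calc ∫ v, (∫ u, K (p.1, u) * L (u, v) ∂μ) * M (v, p.2) ∂μ
      = ∫ v, ∫ u, K (p.1, u) * (L (u, v) * M (v, p.2)) ∂μ ∂μ := by
        refine integral_congr_ae ?_
        filter_upwards [hKL] with v hv
        simp only [← integral_mul_const_of_integrable hv, mul_assoc]
    _ = ∫ u, ∫ v, K (p.1, u) * (L (u, v) * M (v, p.2)) ∂μ ∂μ :=
        (integral_integral_swap hKLM).symm
    _ = ∫ u, K (p.1, u) * ∫ v, L (u, v) * M (v, p.2) ∂μ ∂μ := by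
        refine integral_congr_ae ?_
        filter_upwards [hLM] with u hu
        exact integral_const_mul_of_integrable hu

theorem ae_eq_of_eq_add_kernelComp {F : X × X → E} (hK : HasColumnBound μ w K C)
    (hL : HasColumnBound μ w L C') (hM : HasColumnBound μ w M D) (hw : Measurable w)
    (hw₀ : ∀ x, w x ≠ 0) (hC : C < 1) (hLeq : L =ᵐ[μ.prod μ] F + kernelComp μ K L)
    (hMeq : M =ᵐ[μ.prod μ] F + kernelComp μ K M) : L =ᵐ[μ.prod μ] M := by
  have hsub : L + -M =ᵐ[μ.prod μ] kernelComp μ K (L + -M) := by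
    filter_upwards [hLeq, hMeq, hK.kernelComp_add hL hM.neg hw hw₀] with p hLp hMp hp
    rw [hp, kernelComp_neg]
    simp only [Pi.add_apply, Pi.neg_apply] at hLp hMp ⊢
    nth_rw 1 [hLp, hMp]
    abel
  have hle : (fun p => ‖(L + -M) p‖ₑ) ≤ᵐ[μ.prod μ]
      lkernelComp μ (fun p => ‖K p‖ₑ) (fun p => ‖(L + -M) p‖ₑ) := by
    filter_upwards [hsub] with p hp
    exact hp ▸ enorm_kernelComp_le K (L + -M) p
  filter_upwards [hK.enorm.ae_eq_zero_of_le_lkernelComp (hL.add hM.neg hw).enorm hw hw₀ hC hle]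
    with p hp
  simpa [add_neg_eq_zero] using hp

theorem resolvent_duality {F P Q Z : X × X → E} {CF CP CQ CZ : ℝ≥0}
    (hF : HasColumnBound μ w F CF) (hP : HasColumnBound μ w P CP)
    (hQ : HasColumnBound μ w Q CQ) (hZ : HasColumnBound μ w Z CZ)
    (hw : Measurable w) (hw₀ : ∀ x, w x ≠ 0) (hCP : CP < 1)
    (hPQ : kernelComp μ P F =ᵐ[μ.prod μ] kernelComp μ F Q)
    (hZeq : Z =ᵐ[μ.prod μ] F + kernelComp μ P Z) :
    Z =ᵐ[μ.prod μ] F + kernelComp μ Z Q := by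
  have hPZ := hP.comp hZ hw
  have hZQ := hZ.comp hQ hw
  refine hP.ae_eq_of_eq_add_kernelComp hZ (hF.add hZQ hw) hw hw₀ hCP hZeq ?_
  filter_upwards [hPQ, kernelComp_congr_left (M := Q) hZeq, hF.add_kernelComp hPZ hQ hw hw₀,
    hP.kernelComp_assoc hZ hQ hw hw₀, hP.kernelComp_add hF hZQ hw hw₀]
    with p hPQp hcongr hadd hassoc hadd'
  simp only [Pi.add_apply] at hadd hadd' ⊢
  rw [hcongr, hadd, hassoc, hadd', hPQp]

end HasColumnBound

end KernelComposition

section RiemannLiouvilleKernel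

/-- The convolution kernel `u ^ (α - 1) / Γ α` of the Riemann–Liouville integral of order `α`,
extended by `0` to `u ≤ 0`. -/
noncomputable def rlKernel (α u : ℝ) : ℝ :=
  if 0 < u then u ^ (α - 1) / Real.Gamma α else 0

theorem rlKernel_of_pos {α u : ℝ} (hu : 0 < u) : rlKernel α u = u ^ (α - 1) / Real.Gamma α :=
  if_pos hu

theorem rlKernel_of_nonpos {α u : ℝ} (hu : u ≤ 0) : rlKernel α u = 0 :=
  if_neg hu.not_gt

theorem measurable_rlKernel (α : ℝ) : Measurable (rlKernel α) :=
  Measurable.ite measurableSet_Ioi (by fun_prop) measurable_const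

/-- The exponential weight `e ^ (-l t)` of the spaces `L¹(e^{-lt} dt)`, as an element of `ℝ≥0`. -/
noncomputable def expWeight (l t : ℝ) : ℝ≥0 :=
  (Real.exp (-(l * t))).toNNReal

theorem measurable_expWeight (l : ℝ) : Measurable (expWeight l) := by
  unfold expWeight; fun_prop

theorem expWeight_ne_zero (l t : ℝ) : expWeight l t ≠ 0 :=
  (Real.toNNReal_pos.2 (Real.exp_pos _)).ne'

theorem expWeight_add (l s t : ℝ) : expWeight l (s + t) = expWeight l s * expWeight l t := by
  rw [expWeight, expWeight, expWeight, ← Real.toNNReal_mul (Real.exp_pos _).le, ← Real.exp_add]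
  ring_nf

theorem lintegral_enorm_rlKernel_mul_expWeight {α l : ℝ} (hα : 0 < α) (hl : 0 < l) :
    ∫⁻ u, ‖rlKernel α u‖ₑ * expWeight l u = ENNReal.ofReal (l ^ (-α)) := by
  have hΓ := Real.Gamma_pos_of_pos hα
  have hlaplace : ∫ u in Ioi 0, u ^ (α - 1) / Real.Gamma α * Real.exp (-(l * u)) = l ^ (-α) := by
    simp only [div_mul_eq_mul_div, integral_div, Real.integral_rpow_mul_exp_neg_mul_Ioi hα hl]
    rw [mul_div_cancel_right₀ _ hΓ.ne', one_div, Real.inv_rpow hl.le, Real.rpow_neg hl.le]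
  have hint : IntegrableOn (fun u => u ^ (α - 1) / Real.Gamma α * Real.exp (-(l * u))) (Ioi 0) :=
    Integrable.of_integral_ne_zero (hlaplace ▸ (Real.rpow_pos_of_pos hl _).ne')
  calc ∫⁻ u, ‖rlKernel α u‖ₑ * expWeight l u
      = ∫⁻ u in Ioi 0, ‖rlKernel α u‖ₑ * expWeight l u := by
        refine (setLIntegral_eq_of_support_subset fun u hu => ?_).symm
        by_contra hu'
        exact hu (by simp [rlKernel_of_nonpos (not_lt.1 hu')])
    _ = ∫⁻ u in Ioi 0, ENNReal.ofReal (u ^ (α - 1) / Real.Gamma α * Real.exp (-(l * u))) := by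
        refine setLIntegral_congr_fun measurableSet_Ioi fun u hu => ?_
        have hrpow : 0 ≤ u ^ (α - 1) / Real.Gamma α :=
          div_nonneg (Real.rpow_nonneg (le_of_lt hu) _) hΓ.le
        rw [rlKernel_of_pos hu, Real.enorm_of_nonneg hrpow, ENNReal.ofReal_mul hrpow]
        rfl
    _ = ENNReal.ofReal (l ^ (-α)) := by
        rw [← ofReal_integral_eq_lintegral_ofReal hint, hlaplace]
        filter_upwards [ae_restrict_mem measurableSet_Ioi] with u hu
        exact mul_nonneg (div_nonneg (Real.rpow_nonneg (le_of_lt hu) _) hΓ.le) (Real.exp_pos _).le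

variable {ι : Type*} [Fintype ι]

/-- The sum of the absolute values of the Riemann–Liouville kernels of orders `α i`, a common
convolution majorant for the kernels of the transition equations. -/
noncomputable def rlMajorant (α : ι → ℝ) (u : ℝ) : ℝ≥0∞ :=
  ∑ i, ‖rlKernel (α i) u‖ₑ

variable {α : ι → ℝ}

theorem enorm_rlKernel_le_rlMajorant (i : ι) (u : ℝ) : ‖rlKernel (α i) u‖ₑ ≤ rlMajorant α u :=
  Finset.single_le_sum (f := fun i => ‖rlKernel (α i) u‖ₑ) (fun _ _ => zero_le)
    (Finset.mem_univ i)

theorem exists_lintegral_rlMajorant_mul_expWeight_le (hα : ∀ i, 0 < α i) (D : ℝ≥0) :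
    ∃ (l : ℝ) (L : ℝ≥0), ∫⁻ u, rlMajorant α u * expWeight l u ≤ L ∧ D * L < 1 := by
  have hlim : Filter.Tendsto (fun l : ℝ => D * ∑ i, (l ^ (-α i)).toNNReal) Filter.atTop
      (nhds 0) := by
    have hi (i : ι) : Filter.Tendsto (fun l : ℝ => (l ^ (-α i)).toNNReal) Filter.atTop
        (nhds 0) := by
      simpa using tendsto_real_toNNReal (tendsto_rpow_neg_atTop (hα i))
    simpa using (tendsto_finsetSum Finset.univ fun i _ => hi i).const_mul D
  obtain ⟨l, hl, hDl⟩ :=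
    ((Filter.eventually_gt_atTop 0).and (hlim.eventually_lt_const one_pos)).exists
  refine ⟨l, _, le_of_eq ?_, hDl⟩
  calc ∫⁻ u, rlMajorant α u * expWeight l u
      = ∫⁻ u, ∑ i, ‖rlKernel (α i) u‖ₑ * expWeight l u := by
        simp only [rlMajorant, Finset.sum_mul]
    _ = ∑ i, ∫⁻ u, ‖rlKernel (α i) u‖ₑ * expWeight l u :=
        lintegral_finsetSum _ fun i _ => (measurable_rlKernel (α i)).enorm.mul
          (measurable_expWeight l).coe_nnreal_ennreal
    _ = ((∑ i, (l ^ (-α i)).toNNReal : ℝ≥0) : ℝ≥0∞) := by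
        simp only [lintegral_enorm_rlKernel_mul_expWeight (hα _) hl, ENNReal.ofReal,
          ENNReal.ofNNReal_finsetSum]

end RiemannLiouvilleKernel

section RealKernels

theorem hasColumnBound_of_enorm_le_sub {E : Type*} [NormedAddCommGroup E] {S : Set ℝ} {l : ℝ}
    {C L : ℝ≥0} {K : ℝ × ℝ → E} {k : ℝ → ℝ≥0∞} (hKmeas : StronglyMeasurable K)
    (hK : ∀ᵐ s ∂volume.restrict S, ∀ᵐ t ∂volume.restrict S, ‖K (t, s)‖ₑ ≤ C * k (t - s))
    (hk : ∫⁻ u, k u * expWeight l u ≤ L) :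
    HasColumnBound (volume.restrict S) (expWeight l) K (C * L) where
  stronglyMeasurable := hKmeas
  ae_lintegral_le := by
    filter_upwards [hK] with s hs
    calc ∫⁻ t in S, ‖K (t, s)‖ₑ * expWeight l t
        ≤ ∫⁻ t in S, C * k (t - s) * expWeight l t := by
          refine lintegral_mono_ae ?_
          filter_upwards [hs] with t ht
          gcongr
      _ ≤ ∫⁻ t, C * k (t - s) * expWeight l t := setLIntegral_le_lintegral _ _
      _ = ∫⁻ t, (C * expWeight l s : ℝ≥0) * (k (t - s) * expWeight l (t - s)) := by
          refine lintegral_congr fun t => ?_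
          rw [← sub_add_cancel t s, expWeight_add, add_sub_cancel_right]
          push_cast
          ring
      _ = (C * expWeight l s : ℝ≥0) * ∫⁻ u, k u * expWeight l u := by
          rw [lintegral_const_mul' _ _ ENNReal.coe_ne_top,
            lintegral_sub_right_eq_self fun u => k u * expWeight l u]
      _ ≤ (C * expWeight l s : ℝ≥0) * L := by gcongr
      _ = (C * L : ℝ≥0) * expWeight l s := by push_cast; ring

theorem setIntegral_eq_intervalIntegral_of_eqOn_Ioo {G : Type*} [NormedAddCommGroup G]
    [NormedSpace ℝ G] {S : Set ℝ} {s t : ℝ} {f g : ℝ → G} (hS : MeasurableSet S)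
    (hst : s ≤ t) (hsub : Ioo s t ⊆ S) (hfg : EqOn f g (Ioo s t))
    (hf : ∀ u ∉ Ioo s t, f u = 0) : ∫ u in S, f u = ∫ u in s..t, g u := by
  rw [setIntegral_eq_of_subset_of_forall_sdiff_eq_zero hS hsub fun u hu => hf u hu.2,
    intervalIntegral.integral_of_le hst, integral_Ioc_eq_integral_Ioo,
    setIntegral_congr_fun measurableSet_Ioo hfg]

end RealKernels

section CausalPart

/-- The restriction of `Z` to `s < t`, extended by `0`, as a kernel in `(t, s)`. -/
noncomputable def causalPart {E : Type*} [Zero E] (Z : ℝ → ℝ → E) (p : ℝ × ℝ) : E :=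
  if p.2 < p.1 then Z p.1 p.2 else 0

variable {E : Type*} [Zero E] {Z : ℝ → ℝ → E} {t s : ℝ}

theorem causalPart_of_lt (h : s < t) : causalPart Z (t, s) = Z t s := if_pos h

theorem causalPart_of_le (h : t ≤ s) : causalPart Z (t, s) = 0 := if_neg h.not_gt

theorem measurable_causalPart_apply {ι κ : Type*} {Z : ℝ → ℝ → Matrix ι κ ℝ}
    (hZ : ∀ i j, Measurable fun p : ℝ × ℝ => Z p.1 p.2 i j) (i : ι) (j : κ) :
    Measurable fun p => causalPart Z p i j := by
  simp only [causalPart, apply_ite (fun M : Matrix ι κ ℝ => M i j), Matrix.zero_apply]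
  exact Measurable.ite (measurableSet_lt measurable_snd measurable_fst) (hZ i j) measurable_const

theorem exists_enorm_causalPart_apply_le {ι κ : Type*} [Fintype ι] {α : ι → ℝ}
    {Z : ℝ → ℝ → Matrix ι κ ℝ} (hα : ∀ i, 0 < α i) (Θ : ℝ) :
    ∃ C : ℝ≥0, ∀ t s, (s < t → ∀ i j, |Z t s i j| ≤ (t - s) ^ (α i - 1) * Θ) →
      ∀ i j, ‖causalPart Z (t, s) i j‖ₑ ≤ C * rlMajorant α (t - s) := by
  refine ⟨∑ i, ‖Real.Gamma (α i) * Θ‖₊, fun t s hZ i j => ?_⟩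
  rcases lt_or_ge s t with hst | hts
  · have hΓ : Real.Gamma (α i) ≠ 0 := (Real.Gamma_pos_of_pos (hα i)).ne'
    calc ‖causalPart Z (t, s) i j‖ₑ
        ≤ ‖(t - s) ^ (α i - 1) * Θ‖ₑ := by
          rw [causalPart_of_lt hst]
          exact enorm_le_iff_norm_le.2 ((hZ hst i j).trans (le_abs_self _))
      _ = ‖Real.Gamma (α i) * Θ‖ₑ * ‖rlKernel (α i) (t - s)‖ₑ := by
          rw [rlKernel_of_pos (sub_pos.2 hst), ← enorm_mul]
          congr 1
          field_simp
      _ ≤ (∑ i, ‖Real.Gamma (α i) * Θ‖₊ : ℝ≥0) * rlMajorant α (t - s) := by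
          gcongr
          · exact ENNReal.coe_le_coe.2 (Finset.single_le_sum
              (f := fun i => ‖Real.Gamma (α i) * Θ‖₊) (fun _ _ => zero_le) (Finset.mem_univ i))
          · exact enorm_rlKernel_le_rlMajorant i _
  · simp [causalPart_of_le hts]

end CausalPart

section TransitionEquations

variable {ι : Type*} [DecidableEq ι] {α : ι → ℝ} {A : ℝ → Matrix ι ι ℝ}
  {Z : ℝ → ℝ → Matrix ι ι ℝ} {S : Set ℝ} {t s : ℝ}

/-- The kernel `(t, s) ↦ diag ((t - s) ^ (α i - 1) / Γ (α i))` of the Riemann–Liouville integral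
of multi-order `α`, the common inhomogeneous term of both transition equations. -/
noncomputable def rlMatrix (α : ι → ℝ) (p : ℝ × ℝ) : Matrix ι ι ℝ :=
  Matrix.diagonal fun i => rlKernel (α i) (p.1 - p.2)

theorem rlMatrix_of_le (h : t ≤ s) : rlMatrix α (t, s) = 0 := by
  simp [rlMatrix, rlKernel_of_nonpos (sub_nonpos.2 h)]

theorem rlMatrix_apply_of_lt (h : s < t) (i j : ι) : rlMatrix α (t, s) i j =
    (t - s) ^ (α i - 1) / Real.Gamma (α i) * (if i = j then (1 : ℝ) else 0) := by
  simp [rlMatrix, Matrix.diagonal_apply, rlKernel_of_pos (sub_pos.2 h)]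

theorem rlMatrix_apply_of_lt' (h : s < t) (i j : ι) : rlMatrix α (t, s) i j =
    (t - s) ^ (α j - 1) / Real.Gamma (α j) * (if i = j then (1 : ℝ) else 0) := by
  rw [rlMatrix_apply_of_lt h]
  split_ifs with hij <;> simp [hij]

theorem measurable_rlMatrix_apply (i j : ι) : Measurable fun p => rlMatrix α p i j := by
  have := measurable_rlKernel (α i)
  simp only [rlMatrix, Matrix.diagonal_apply]
  split_ifs
  · fun_prop
  · exact measurable_const

variable [Fintype ι]

theorem enorm_rlMatrix_apply_le (p : ℝ × ℝ) (i j : ι) :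
    ‖rlMatrix α p i j‖ₑ ≤ rlMajorant α (p.1 - p.2) := by
  rw [rlMatrix, Matrix.diagonal_apply]
  split_ifs
  · exact enorm_rlKernel_le_rlMajorant i _
  · simp

/-- The left state-transition equation at `(t, s)`; row `i` carries the order `α i`. -/
def LeftTransitionEq (α : ι → ℝ) (A : ℝ → Matrix ι ι ℝ) (Z : ℝ → ℝ → Matrix ι ι ℝ)
    (t s : ℝ) : Prop :=
  ∀ i j, Z t s i j = (t - s) ^ (α i - 1) / Real.Gamma (α i) * (if i = j then (1 : ℝ) else 0)
    + (1 / Real.Gamma (α i)) * ∫ τ in s..t, (t - τ) ^ (α i - 1) * ∑ k, A τ i k * Z τ s k j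

/-- The right state-transition equation at `(t, s)`; column `j` carries the order `α j`. -/
def RightTransitionEq (α : ι → ℝ) (A : ℝ → Matrix ι ι ℝ) (Z : ℝ → ℝ → Matrix ι ι ℝ)
    (t s : ℝ) : Prop :=
  ∀ i j, Z t s i j = (t - s) ^ (α j - 1) / Real.Gamma (α j) * (if i = j then (1 : ℝ) else 0)
    + (1 / Real.Gamma (α j)) * ∫ τ in s..t, (τ - s) ^ (α j - 1) * ∑ k, Z t τ i k * A τ k j

theorem setIntegral_rlMatrix_mul_causalPart_apply (hS : MeasurableSet S) (hst : s < t)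
    (hsub : Ioo s t ⊆ S) (i j : ι) :
    ∫ u in S, (rlMatrix α (t, u) * A u * causalPart Z (u, s)) i j =
      (1 / Real.Gamma (α i)) *
        ∫ τ in s..t, (t - τ) ^ (α i - 1) * ∑ k, A τ i k * Z τ s k j := by
  rw [← intervalIntegral.integral_const_mul]
  refine setIntegral_eq_intervalIntegral_of_eqOn_Ioo hS hst.le hsub (fun u hu => ?_) fun u hu => ?_
  · rw [causalPart_of_lt hu.1, Matrix.mul_assoc, rlMatrix, Matrix.diagonal_mul, Matrix.mul_apply,
      rlKernel_of_pos (sub_pos.2 hu.2)]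
    ring
  · rcases not_and_or.1 hu with hsu | hut
    · simp [causalPart_of_le (not_lt.1 hsu)]
    · simp [rlMatrix_of_le (not_lt.1 hut)]

theorem setIntegral_causalPart_mul_rlMatrix_apply (hS : MeasurableSet S) (hst : s < t)
    (hsub : Ioo s t ⊆ S) (i j : ι) :
    ∫ u in S, (causalPart Z (t, u) * (A u * rlMatrix α (u, s))) i j =
      (1 / Real.Gamma (α j)) *
        ∫ τ in s..t, (τ - s) ^ (α j - 1) * ∑ k, Z t τ i k * A τ k j := by
  rw [← intervalIntegral.integral_const_mul]
  refine setIntegral_eq_intervalIntegral_of_eqOn_Ioo hS hst.le hsub (fun u hu => ?_) fun u hu => ?_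
  · rw [causalPart_of_lt hu.2, ← Matrix.mul_assoc, rlMatrix, Matrix.mul_diagonal, Matrix.mul_apply,
      rlKernel_of_pos (sub_pos.2 hu.1)]
    ring
  · rcases not_and_or.1 hu with hsu | hut
    · simp [rlMatrix_of_le (not_lt.1 hsu)]
    · simp [causalPart_of_le (not_lt.1 hut)]

end TransitionEquations

section MatrixKernels

theorem stronglyMeasurable_matrix_of_apply {ι κ T : Type*} [Countable ι] [Countable κ]
    [MeasurableSpace T] {f : T → Matrix ι κ ℝ} (hf : ∀ i j, Measurable fun x => f x i j) :
    StronglyMeasurable f :=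
  Measurable.stronglyMeasurable (β := ι → κ → ℝ)
    (measurable_pi_iff.2 fun i => measurable_pi_iff.2 (hf i))

open scoped Matrix.Norms.L2Operator

variable {ι : Type*} [Fintype ι] [DecidableEq ι] {T : Type*} [MeasurableSpace T] {α : ι → ℝ}
  {A : ℝ → Matrix ι ι ℝ} {Z : ℝ → ℝ → Matrix ι ι ℝ} {S : Set ℝ} {t s : ℝ}

theorem eq_sum_smul_single (M : Matrix ι ι ℝ) :
    M = ∑ i, ∑ j, M i j • Matrix.single i j (1 : ℝ) := by
  simpa only [Matrix.smul_single, smul_eq_mul, mul_one] using Matrix.matrix_eq_sum_single M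

theorem exists_enorm_matrix_le (ι : Type*) [Fintype ι] [DecidableEq ι] :
    ∃ C : ℝ≥0, ∀ (M : Matrix ι ι ℝ) (B : ℝ≥0∞), (∀ i j, ‖M i j‖ₑ ≤ B) → ‖M‖ₑ ≤ C * B := by
  refine ⟨∑ i, ∑ j, ‖(Matrix.single i j 1 : Matrix ι ι ℝ)‖₊, fun M B hM => ?_⟩
  calc ‖M‖ₑ
      = ‖∑ i, ∑ j, M i j • (Matrix.single i j 1 : Matrix ι ι ℝ)‖ₑ := by
        rw [← eq_sum_smul_single M]
    _ ≤ ∑ i, ∑ j, ‖M i j • (Matrix.single i j 1 : Matrix ι ι ℝ)‖ₑ :=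
        (enorm_sum_le _ _).trans (Finset.sum_le_sum fun _ _ => enorm_sum_le _ _)
    _ ≤ ∑ i, ∑ j, ‖(Matrix.single i j 1 : Matrix ι ι ℝ)‖ₑ * B := by
        gcongr with i _ j _
        rw [enorm_smul, mul_comm]
        gcongr
        exact hM i j
    _ = (∑ i, ∑ j, ‖(Matrix.single i j 1 : Matrix ι ι ℝ)‖₊ : ℝ≥0) * B := by
        push_cast
        simp only [Finset.sum_mul, enorm_eq_nnnorm]

theorem integral_matrix_apply {μ : Measure T} {f : T → Matrix ι ι ℝ} (hf : Integrable f μ)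
    (i j : ι) : (∫ x, f x ∂μ) i j = ∫ x, f x i j ∂μ :=
  ((LinearMap.toContinuousLinearMap (Matrix.entryLinearMap ℝ ℝ i j)).integral_comp_comm hf).symm

theorem causalPart_eq_add_kernelComp_iff_left (hS : S.OrdConnected) (ht : t ∈ S) (hs : s ∈ S)
    (hint : IntegrableOn (fun u => rlMatrix α (t, u) * A u * causalPart Z (u, s)) S) :
    causalPart Z (t, s) = rlMatrix α (t, s) +
        kernelComp (volume.restrict S) (fun p => rlMatrix α p * A p.2) (causalPart Z) (t, s) ↔
      (s < t → LeftTransitionEq α A Z t s) := by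
  rcases lt_or_ge s t with hst | hts
  · have hsub : Ioo s t ⊆ S := Ioo_subset_Icc_self.trans (hS.out hs ht)
    simp only [hst, forall_true_left, ← Matrix.ext_iff, Matrix.add_apply, kernelComp,
      integral_matrix_apply hint, rlMatrix_apply_of_lt hst, causalPart_of_lt hst,
      setIntegral_rlMatrix_mul_causalPart_apply hS.measurableSet hst hsub, LeftTransitionEq]
  · have hzero (u : ℝ) : rlMatrix α (t, u) * A u * causalPart Z (u, s) = 0 := by
      rcases le_total t u with htu | hut
      · simp [rlMatrix_of_le htu]
      · simp [causalPart_of_le (hut.trans hts)]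
    simp [kernelComp, hzero, causalPart_of_le hts, rlMatrix_of_le hts, hts.not_gt]

theorem causalPart_eq_add_kernelComp_iff_right (hS : S.OrdConnected) (ht : t ∈ S) (hs : s ∈ S)
    (hst : s < t)
    (hint : IntegrableOn (fun u => causalPart Z (t, u) * (A u * rlMatrix α (u, s))) S) :
    causalPart Z (t, s) = rlMatrix α (t, s) +
        kernelComp (volume.restrict S) (causalPart Z) (fun p => A p.1 * rlMatrix α p) (t, s) ↔
      RightTransitionEq α A Z t s := by
  have hsub : Ioo s t ⊆ S := Ioo_subset_Icc_self.trans (hS.out hs ht)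
  simp only [← Matrix.ext_iff, Matrix.add_apply, kernelComp, integral_matrix_apply hint,
    rlMatrix_apply_of_lt' hst, causalPart_of_lt hst,
    setIntegral_causalPart_mul_rlMatrix_apply hS.measurableSet hst hsub, RightTransitionEq]

theorem exists_hasColumnBound (hα : ∀ i, 0 < α i) (hAmeas : ∀ i j, Measurable fun t => A t i j)
    {M : ℝ} (hA : ∀ᵐ t ∂volume.restrict S, ∀ i j, |A t i j| ≤ M)
    (hZmeas : ∀ i j, Measurable fun p : ℝ × ℝ => Z p.1 p.2 i j) {Θ : ℝ}
    (hZ : ∀ᵐ s ∂volume.restrict S, ∀ᵐ t ∂volume.restrict S,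
      s < t → ∀ i j, |Z t s i j| ≤ (t - s) ^ (α i - 1) * Θ) :
    ∃ (l : ℝ) (CF CP CQ CZ : ℝ≥0), CP < 1 ∧
      HasColumnBound (volume.restrict S) (expWeight l) (rlMatrix α) CF ∧
      HasColumnBound (volume.restrict S) (expWeight l) (fun p => rlMatrix α p * A p.2) CP ∧
      HasColumnBound (volume.restrict S) (expWeight l) (fun p => A p.1 * rlMatrix α p) CQ ∧
      HasColumnBound (volume.restrict S) (expWeight l) (causalPart Z) CZ := by
  obtain ⟨C, hC⟩ := exists_enorm_matrix_le ι
  obtain ⟨D, hD⟩ := exists_enorm_causalPart_apply_le (Z := Z) hα Θ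
  obtain ⟨l, L, hL, hlt⟩ := exists_lintegral_rlMajorant_mul_expWeight_le hα (C * M.toNNReal * C)
  have hAmeas' : StronglyMeasurable A := stronglyMeasurable_matrix_of_apply hAmeas
  have hA' : ∀ᵐ t ∂volume.restrict S, ‖A t‖ₑ ≤ (C * M.toNNReal : ℝ≥0) := by
    filter_upwards [hA] with t ht
    rw [ENNReal.coe_mul]
    refine hC _ _ fun i j => ?_
    rw [Real.enorm_eq_ofReal_abs]
    exact ENNReal.ofReal_le_ofReal (ht i j)
  have hF : HasColumnBound (volume.restrict S) (expWeight l) (rlMatrix α) (C * L) :=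
    hasColumnBound_of_enorm_le_sub (stronglyMeasurable_matrix_of_apply measurable_rlMatrix_apply)
      (ae_of_all _ fun _ => ae_of_all _ fun _ => hC _ _ (enorm_rlMatrix_apply_le _)) hL
  have hZ' : HasColumnBound (volume.restrict S) (expWeight l) (causalPart Z) (C * D * L) := by
    refine hasColumnBound_of_enorm_le_sub
      (stronglyMeasurable_matrix_of_apply (measurable_causalPart_apply hZmeas)) ?_ hL
    filter_upwards [hZ] with s hs
    filter_upwards [hs] with t ht
    rw [ENNReal.coe_mul, mul_assoc]
    exact hC _ _ (hD t s ht)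
  exact ⟨l, _, _, _, _, (mul_assoc _ _ _).symm.trans_lt hlt, hF, hF.mul_snd hAmeas' hA',
    hF.fst_mul hAmeas' hA', hZ'⟩

theorem kernelComp_rlMatrix_assoc (μ : Measure ℝ) :
    kernelComp μ (fun p => rlMatrix α p * A p.2) (rlMatrix α) =
      kernelComp μ (rlMatrix α) (fun p => A p.1 * rlMatrix α p) := by
  funext p
  simp only [kernelComp, mul_assoc]

theorem ae_rightTransitionEq_of_ae_leftTransitionEq (hS : S.OrdConnected) (hα : ∀ i, 0 < α i)
    (hAmeas : ∀ i j, Measurable fun t => A t i j) {M : ℝ}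
    (hA : ∀ᵐ t ∂volume.restrict S, ∀ i j, |A t i j| ≤ M)
    (hZmeas : ∀ i j, Measurable fun p : ℝ × ℝ => Z p.1 p.2 i j) {Θ : ℝ}
    (hZ : ∀ᵐ s ∂volume.restrict S, ∀ᵐ t ∂volume.restrict S,
      s < t → ∀ i j, |Z t s i j| ≤ (t - s) ^ (α i - 1) * Θ)
    (hleft : ∀ᵐ s ∂volume.restrict S, ∀ᵐ t ∂volume.restrict S,
      s < t → LeftTransitionEq α A Z t s) :
    ∀ᵐ t ∂volume.restrict S, ∀ᵐ s ∂volume.restrict S,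
      s < t → RightTransitionEq α A Z t s := by
  obtain ⟨l, CF, CP, CQ, CZ, hCP, hF, hP, hQ, hZ⟩ :=
    exists_hasColumnBound hα hAmeas hA hZmeas hZ
  have hw := measurable_expWeight l
  have hw₀ := expWeight_ne_zero l
  have hmem := ae_restrict_mem (μ := volume) hS.measurableSet
  have hleft' : causalPart Z =ᵐ[(volume.restrict S).prod (volume.restrict S)]
      rlMatrix α + kernelComp (volume.restrict S) (fun p => rlMatrix α p * A p.2)
        (causalPart Z) := by
    refine ae_prod_of_ae_ae_swap (hZ.stronglyMeasurable.measurableSet_eq_fun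
      (hF.stronglyMeasurable.add
        (stronglyMeasurable_kernelComp hP.stronglyMeasurable hZ.stronglyMeasurable))) ?_
    filter_upwards [hmem, hleft, ae_ae_swap_of_ae_prod (hP.ae_integrable_mul hZ hw hw₀)]
      with s hs hs_left hs_int
    filter_upwards [hmem, hs_left, hs_int] with t ht hleft_ts hint
    exact (causalPart_eq_add_kernelComp_iff_left hS ht hs hint).2 hleft_ts
  have hright := hF.resolvent_duality hP hQ hZ hw hw₀ hCP
    (.of_eq (kernelComp_rlMatrix_assoc _)) hleft'
  filter_upwards [hmem, Measure.ae_ae_of_ae_prod hright,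
    Measure.ae_ae_of_ae_prod (hZ.ae_integrable_mul hQ hw hw₀)] with t ht ht_right ht_int
  filter_upwards [hmem, ht_right, ht_int] with s hs hright_ts hint hst
  exact (causalPart_eq_add_kernelComp_iff_right hS ht hs hst hint).1 hright_ts

end MatrixKernels

section Localization

theorem exists_seq_iUnion_Icc_eq {β : Type*} [LinearOrder β] [TopologicalSpace β]
    [OrderTopology β] [SecondCountableTopology β] {I : Set β} {a : β} (ha : IsLeast I a)
    (hI : I.OrdConnected) : ∃ b : ℕ → β, (∀ n, b n ∈ I) ∧ ⋃ n, Icc a (b n) = I := by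
  have : Nonempty I := ⟨⟨a, ha.1⟩⟩
  obtain ⟨b, hb⟩ := Filter.exists_seq_tendsto (Filter.atTop : Filter I)
  refine ⟨fun n => b n, fun n => (b n).2, Subset.antisymm ?_ fun t ht => ?_⟩
  · exact iUnion_subset fun n => hI.out ha.1 (b n).2
  · obtain ⟨n, hn⟩ := (hb.eventually_ge_atTop ⟨t, ht⟩).exists
    exact mem_iUnion.2 ⟨n, ha.2 ht, hn⟩

theorem ae_ae_of_forall_ae_ae_restrict_Icc {β : Type*} [LinearOrder β] [TopologicalSpace β]
    [OrderTopology β] [SecondCountableTopology β] [MeasurableSpace β] [BorelSpace β]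
    {μ : Measure β} {I : Set β} {a : β} (ha : IsLeast I a) (hI : I.OrdConnected) {q : β → β → Prop}
    (h : ∀ b ∈ I, ∀ᵐ t ∂μ.restrict (Icc a b), ∀ᵐ s ∂μ.restrict (Icc a b), s < t → q t s) :
    ∀ᵐ t ∂μ.restrict I, ∀ᵐ s ∂μ.restrict I, s < t → q t s := by
  obtain ⟨b, hbI, hb⟩ := exists_seq_iUnion_Icc_eq ha hI
  have hcover : ∀ᵐ t ∂μ.restrict (⋃ n, Icc a (b n)), ∀ᵐ s ∂μ.restrict I, s < t → q t s := by
    rw [ae_restrict_iUnion_iff]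
    intro n
    filter_upwards [ae_restrict_mem measurableSet_Icc, h (b n) (hbI n)] with t ht hq
    rw [ae_restrict_iff' measurableSet_Icc] at hq
    rw [ae_restrict_iff' hI.measurableSet]
    filter_upwards [hq] with s hs hsI hst
    exact hs ⟨ha.2 hsI, hst.le.trans ht.2⟩ hst
  rwa [hb] at hcover

end Localization

theorem statement13_general {ι : Type*} [Fintype ι] [DecidableEq ι] {a : ℝ} {I : Set ℝ}
    (ha : IsLeast I a) (hI : I.OrdConnected) {α : ι → ℝ} (hα : ∀ i, 0 < α i)
    {A : ℝ → Matrix ι ι ℝ} (hAmeas : ∀ i j, Measurable fun t => A t i j)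
    (hA : ∀ b ∈ I, ∃ M : ℝ, ∀ᵐ t ∂volume.restrict (Icc a b), ∀ i j, |A t i j| ≤ M)
    {Z : ℝ → ℝ → Matrix ι ι ℝ} (hZmeas : ∀ i j, Measurable fun p : ℝ × ℝ => Z p.1 p.2 i j)
    (hleft : ∀ᵐ s ∂volume.restrict I, ∀ᵐ t ∂volume.restrict I,
      s < t → LeftTransitionEq α A Z t s)
    (hZ : ∀ b ∈ I, ∃ Θ : ℝ, ∀ᵐ s ∂volume.restrict (Ico a b), ∀ᵐ t ∂volume.restrict I,
      s < t → t ≤ b → ∀ i j, |Z t s i j| ≤ (t - s) ^ (α i - 1) * Θ) :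
    ∀ᵐ t ∂volume.restrict I, ∀ᵐ s ∂volume.restrict I, s < t → RightTransitionEq α A Z t s := by
  refine ae_ae_of_forall_ae_ae_restrict_Icc ha hI fun b hb => ?_
  have hsub : Icc a b ⊆ I := hI.out ha.1 hb
  obtain ⟨M, hM⟩ := hA b hb
  obtain ⟨Θ, hΘ⟩ := hZ b hb
  rw [restrict_Ico_eq_restrict_Icc] at hΘ
  refine ae_rightTransitionEq_of_ae_leftTransitionEq ordConnected_Icc hα hAmeas hM hZmeas
    (Θ := Θ) ?_ ?_
  · filter_upwards [hΘ] with s hs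
    filter_upwards [ae_restrict_mem measurableSet_Icc, ae_restrict_of_ae_restrict_of_subset hsub hs]
      with t ht hts hst using hts hst ht.2
  · filter_upwards [ae_restrict_of_ae_restrict_of_subset hsub hleft] with s hs
    exact ae_restrict_of_ae_restrict_of_subset hsub hs

theorem statement13 (a : ℝ) (I : Set ℝ)
    (haI : a ∈ I) (hIsub : I ⊆ Set.Ici a) (hIint : (interior I).Nonempty)
    (hIord : I.OrdConnected)
    (m : ℕ) (hm : 0 < m)
    (α : Fin m → ℝ) (hα : ∀ i, 0 < α i ∧ α i ≤ 1)
    (A : ℝ → Matrix (Fin m) (Fin m) ℝ)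
    -- `A` is measurable and locally essentially bounded on `I`
    (hAmeas : ∀ i j, Measurable fun t => A t i j)
    (hAbdd : ∀ b ∈ I, ∃ M : ℝ,
      ∀ᵐ t ∂(volume.restrict (Set.Icc a b)), ∀ i j, |A t i j| ≤ M)
    (Z : ℝ → ℝ → Matrix (Fin m) (Fin m) ℝ)
    (hZmeas : ∀ i j, Measurable fun p : ℝ × ℝ => Z p.1 p.2 i j)
    -- `Z` satisfies the left state-transition integral equation
    -- (row-constant multi-order: the `(i,j)` entry carries the order `α_i`)
    (hZeq : ∀ s ∈ I, ∀ᵐ t ∂(volume.restrict I), s < t → ∀ i j,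
      Z t s i j = (t - s) ^ (α i - 1) / Real.Gamma (α i) * (if i = j then (1:ℝ) else 0)
        + (1 / Real.Gamma (α i)) *
            ∫ τ in s..t, (t - τ) ^ (α i - 1) * ∑ k, A τ i k * Z τ s k j)
    -- the bound `|Z_{ij}(t,s)| ≤ (t-s)^{α_i - 1} Θ^b` on each `[a,b] ⊆ I`
    (hZbdd : ∀ b ∈ I, ∃ Θ : ℝ, 0 ≤ Θ ∧
      ∀ s ∈ Set.Ico a b, ∀ᵐ t ∂(volume.restrict I), s < t → t ≤ b → ∀ i j,
        |Z t s i j| ≤ (t - s) ^ (α i - 1) * Θ) :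
    -- `Z` satisfies the right state-transition integral equation
    -- (transposed, column-constant multi-order: the `(i,j)` entry carries `α_j`)
    ∀ᵐ t ∂(volume.restrict I), ∀ᵐ s ∂(volume.restrict I), s < t → ∀ i j,
      Z t s i j = (t - s) ^ (α j - 1) / Real.Gamma (α j) * (if i = j then (1:ℝ) else 0)
        + (1 / Real.Gamma (α j)) *
            ∫ τ in s..t, (τ - s) ^ (α j - 1) * ∑ k, Z t τ i k * A τ k j := by
  refine statement13_general ⟨haI, hIsub⟩ hIord (fun i => (hα i).1) hAmeas hAbdd hZmeas
    (ae_restrict_of_forall_mem hIord.measurableSet hZeq) fun b hb => ?_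
  obtain ⟨Θ, -, hΘ⟩ := hZbdd b hb
  exact ⟨Θ, ae_restrict_of_forall_mem measurableSet_Ico hΘ⟩
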